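/- Let (G,·) be a group and θ ∈ Aut(G) with θ^{n-1} = id, and (G,f) = der_θ(G,·). Then there is an injective group homomorphism α : Aut(G,f) → Aut(ℤ_{n-1} ⋉ G), where ℤ_{n-1} acts on G via i·x = θ^i(x), given by α(R_u φ)(i,x) = (i, u⁻¹φ(x)u·δ(i,u)). -/

import Mathlib

/-- The `n`-ary operation of `der_θ(G,·)`. -/
def derF {G : Type*} [Group G] (n : ℕ) (θ : MulAut G) (x : Fin n → G) : G :=
  (List.ofFn fun i : Fin n => (θ ^ (i : ℕ)) (x i)).prod

/-- `δ(i,u) = θ(u)·θ²(u)⋯θ^i(u)`. -/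
def delta {G : Type*} [Group G] (θ : MulAut G) (k : ℕ) (u : G) : G :=
  (List.ofFn fun t : Fin k => (θ ^ ((t : ℕ) + 1)) u).prod

/-- Multiplication of `ℤ_{n-1} ⋉ G` where `i` acts by `θ^i`. -/
def sdMul {G : Type*} [Group G] (n : ℕ) (θ : MulAut G) (p q : ZMod (n - 1) × G) :
    ZMod (n - 1) × G :=
  (p.1 + q.1, p.2 * (θ ^ p.1.val) q.2)

/-- `α(R_u φ)(i,x) = (i, u⁻¹·φ(x)·u·δ(i,u))`. -/
def alphaMap {G : Type*} [Group G] (n : ℕ) (θ φ : MulAut G) (u : G)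
    (p : ZMod (n - 1) × G) : ZMod (n - 1) × G :=
  (p.1, u⁻¹ * φ p.2 * u * delta θ p.1.val u)

/-! In the holomorph of `G`, the element `δ(i,u) θ^i` is the `i`-th power of `θ(u) θ`.  Writing
`ψ` for `x ↦ u⁻¹ φ(x) u`, the condition `[φ,θ] = I_u` says that `ψ` conjugates `θ` to `θ I_u`,
hence `θ^i` to `I_{δ(i,u)} θ^i`.  So `α(R_u φ)` is the map which is `ψ` on `G` and sends the
generator `θ` of the acting cyclic group to `θ(u) θ`; idempotency of `u` is the relation
`δ(n-1,u) = 1` which makes this well defined on `ℤ_{n-1}`. -/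

theorem eq_and_eq_of_forall_map_mul_eq {F M N : Type*} [MulOneClass M] [RightCancelMonoid N]
    [FunLike F M N] [MonoidHomClass F M N] {f g : F} {a b : N}
    (h : ∀ x, f x * a = g x * b) : f = g ∧ a = b := by
  have hab : a = b := by simpa using h 1
  subst hab
  exact ⟨DFunLike.ext f g fun x => mul_right_cancel (h x), rfl⟩

section

open scoped commutatorElement

variable {G : Type*} [Group G]

theorem mul_conj_eq_conj_apply_mul (θ : MulAut G) (u : G) :
    θ * MulAut.conj u = MulAut.conj (θ u) * θ := by
  ext x
  simp

theorem delta_zero (θ : MulAut G) (u : G) : delta θ 0 u = 1 := by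
  simp [delta]

theorem delta_succ (θ : MulAut G) (k : ℕ) (u : G) :
    delta θ (k + 1) u = delta θ k u * (θ ^ (k + 1)) u := by
  simp [delta, List.ofFn_succ_last, -List.ofFn_succ]

theorem delta_one (θ : MulAut G) (u : G) : delta θ 1 u = θ u := by
  simp [delta]

theorem delta_add (θ : MulAut G) (i j : ℕ) (u : G) :
    delta θ (i + j) u = delta θ i u * (θ ^ i) (delta θ j u) := by
  induction j with
  | zero => simp [delta_zero]
  | succ j ih =>
    rw [← add_assoc, delta_succ, ih, delta_succ, map_mul, ← MulAut.mul_apply, ← pow_add, mul_assoc,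
      add_assoc]

theorem derF_succ_const (k : ℕ) (θ : MulAut G) (u : G) :
    derF (k + 1) θ (fun _ => u) = u * delta θ k u := by
  simp [derF, delta]

theorem delta_sub_one_eq_one_of_derF_const {n : ℕ} {θ : MulAut G} {u : G}
    (hu : derF n θ (fun _ => u) = u) : delta θ (n - 1) u = 1 := by
  cases n with
  | zero => exact delta_zero θ u
  | succ k => rwa [derF_succ_const, mul_eq_left] at hu

theorem delta_periodic {m : ℕ} {θ : MulAut G} {u : G} (hu : delta θ m u = 1) :
    Function.Periodic (fun k => delta θ k u) m := fun k => by
  simp [delta_add, hu]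

theorem delta_val_add {m : ℕ} [NeZero m] {θ : MulAut G} {u : G} (hu : delta θ m u = 1)
    (i j : ZMod m) :
    delta θ (i + j).val u = delta θ i.val u * (θ ^ i.val) (delta θ j.val u) := by
  rw [ZMod.val_add, (delta_periodic hu).map_mod_nat, delta_add]

-- For `m = 1` the left-hand side is `δ(0,u) = 1`, and it is `hu` that gives `θ(u) = 1`.
theorem delta_val_one {m : ℕ} {θ : MulAut G} {u : G} (hu : delta θ m u = 1) :
    delta θ (1 : ZMod m).val u = θ u := by
  rw [← Nat.cast_one, ZMod.val_natCast, (delta_periodic hu).map_mod_nat, delta_one]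

theorem mul_conj_pow (θ : MulAut G) (u : G) (i : ℕ) :
    (θ * MulAut.conj u) ^ i = MulAut.conj (delta θ i u) * θ ^ i := by
  induction i with
  | zero => simp [delta_zero]
  | succ i ih =>
    calc (θ * MulAut.conj u) ^ (i + 1)
        = MulAut.conj (delta θ i u) * (θ ^ (i + 1) * MulAut.conj u) := by
          rw [pow_succ, ih, pow_succ]
          simp only [mul_assoc]
      _ = MulAut.conj (delta θ (i + 1) u) * θ ^ (i + 1) := by
          rw [mul_conj_eq_conj_apply_mul, delta_succ, map_mul, mul_assoc]

/-- The automorphism `x ↦ u⁻¹ φ(x) u` of `G`, which is the restriction of `α(R_u φ)` to the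
normal factor `G` of `ℤ_{n-1} ⋉ G`. -/
def conjTwist (φ : MulAut G) (u : G) : MulAut G :=
  (MulAut.conj u)⁻¹ * φ

theorem conjTwist_apply (φ : MulAut G) (u x : G) : conjTwist φ u x = u⁻¹ * φ x * u :=
  rfl

theorem conjTwist_mul (φ₁ φ₂ : MulAut G) (u₁ u₂ : G) :
    conjTwist (φ₁ * φ₂) (φ₁ u₂ * u₁) = conjTwist φ₁ u₁ * conjTwist φ₂ u₂ := by
  ext x
  simp [conjTwist_apply, mul_assoc]

theorem semiconjBy_conjTwist {θ φ : MulAut G} {u : G} (h : ⁅φ, θ⁆ = MulAut.conj u) :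
    SemiconjBy (conjTwist φ u) θ (θ * MulAut.conj u) := by
  rw [SemiconjBy, conjTwist, ← h, commutatorElement_def]
  group

theorem conjTwist_pow_apply_mul_delta {θ φ : MulAut G} {u : G} (h : ⁅φ, θ⁆ = MulAut.conj u)
    (i : ℕ) (x : G) :
    conjTwist φ u ((θ ^ i) x) * delta θ i u = delta θ i u * (θ ^ i) (conjTwist φ u x) := by
  have hpow : conjTwist φ u * θ ^ i = MulAut.conj (delta θ i u) * θ ^ i * conjTwist φ u := by
    rw [← mul_conj_pow]
    exact (semiconjBy_conjTwist h).pow_right i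
  have hx := DFunLike.congr_fun hpow x
  simp only [MulAut.mul_apply, MulAut.conj_apply] at hx
  rw [hx, inv_mul_cancel_right]

theorem delta_apply_mul {θ φ : MulAut G} {u : G} (h : ⁅φ, θ⁆ = MulAut.conj u) (v : G) (i : ℕ) :
    delta θ i (φ v * u) = conjTwist φ u (delta θ i v) * delta θ i u := by
  induction i with
  | zero => simp [delta_zero]
  | succ i ih =>
    calc delta θ (i + 1) (φ v * u)
        = conjTwist φ u (delta θ i v) * delta θ i u * (θ ^ (i + 1)) (u * conjTwist φ u v) := by
          rw [delta_succ, ih, conjTwist_apply φ u v, mul_assoc u⁻¹, mul_inv_cancel_left]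
      _ = conjTwist φ u (delta θ i v) *
            (delta θ (i + 1) u * (θ ^ (i + 1)) (conjTwist φ u v)) := by
          rw [map_mul, delta_succ]
          simp only [mul_assoc]
      _ = conjTwist φ u (delta θ (i + 1) v) * delta θ (i + 1) u := by
          rw [← conjTwist_pow_apply_mul_delta h, delta_succ θ i v, map_mul, mul_assoc]

theorem alphaMap_mk (n : ℕ) (θ φ : MulAut G) (u : G) (i : ZMod (n - 1)) (x : G) :
    alphaMap n θ φ u (i, x) = (i, conjTwist φ u x * delta θ i.val u) :=
  rfl

theorem alphaMap_bijective (n : ℕ) (θ φ : MulAut G) (u : G) :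
    Function.Bijective (alphaMap n θ φ u) := by
  constructor
  · rintro ⟨i, x⟩ ⟨j, y⟩ hxy
    simp only [alphaMap_mk, Prod.mk.injEq] at hxy
    obtain ⟨rfl, hxy⟩ := hxy
    rw [(conjTwist φ u).injective (mul_right_cancel hxy)]
  · rintro ⟨i, y⟩
    obtain ⟨x, hx⟩ := (conjTwist φ u).surjective (y * (delta θ i.val u)⁻¹)
    exact ⟨(i, x), by rw [alphaMap_mk, hx, inv_mul_cancel_right]⟩

theorem alphaMap_sdMul {n : ℕ} [NeZero (n - 1)] {θ φ : MulAut G} {u : G}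
    (hu : delta θ (n - 1) u = 1) (h : ⁅φ, θ⁆ = MulAut.conj u) (p q : ZMod (n - 1) × G) :
    alphaMap n θ φ u (sdMul n θ p q) =
      sdMul n θ (alphaMap n θ φ u p) (alphaMap n θ φ u q) := by
  obtain ⟨i, x⟩ := p
  obtain ⟨j, y⟩ := q
  refine Prod.ext rfl ?_
  calc conjTwist φ u (x * (θ ^ i.val) y) * delta θ (i + j).val u
      = conjTwist φ u x * (conjTwist φ u ((θ ^ i.val) y) * delta θ i.val u) *
          (θ ^ i.val) (delta θ j.val u) := by
        rw [delta_val_add hu, map_mul]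
        simp only [mul_assoc]
    _ = conjTwist φ u x * delta θ i.val u *
          (θ ^ i.val) (conjTwist φ u y * delta θ j.val u) := by
        rw [conjTwist_pow_apply_mul_delta h, map_mul]
        simp only [mul_assoc]

theorem alphaMap_mul (n : ℕ) {θ φ₁ : MulAut G} {u₁ : G} (h₁ : ⁅φ₁, θ⁆ = MulAut.conj u₁)
    (φ₂ : MulAut G) (u₂ : G) :
    alphaMap n θ (φ₁ * φ₂) (φ₁ u₂ * u₁) = alphaMap n θ φ₁ u₁ ∘ alphaMap n θ φ₂ u₂ := by
  ext1 ⟨i, x⟩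
  simp only [Function.comp_apply, alphaMap_mk, conjTwist_mul, delta_apply_mul h₁, map_mul,
    MulAut.mul_apply, mul_assoc]

theorem eq_and_eq_of_alphaMap_eq {n : ℕ} {θ φ₁ φ₂ : MulAut G} {u₁ u₂ : G}
    (hu₁ : delta θ (n - 1) u₁ = 1) (hu₂ : delta θ (n - 1) u₂ = 1)
    (hα : alphaMap n θ φ₁ u₁ = alphaMap n θ φ₂ u₂) : φ₁ = φ₂ ∧ u₁ = u₂ := by
  have hsnd (i : ZMod (n - 1)) (x : G) :
      conjTwist φ₁ u₁ x * delta θ i.val u₁ = conjTwist φ₂ u₂ x * delta θ i.val u₂ :=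
    congrArg Prod.snd (congrFun hα (i, x))
  obtain ⟨htwist, hθu⟩ : conjTwist φ₁ u₁ = conjTwist φ₂ u₂ ∧ θ u₁ = θ u₂ :=
    eq_and_eq_of_forall_map_mul_eq fun x => by
      simpa only [delta_val_one hu₁, delta_val_one hu₂] using hsnd 1 x
  obtain rfl : u₁ = u₂ := θ.injective hθu
  exact ⟨mul_left_cancel htwist, rfl⟩

theorem alpha_embedding_general (n : ℕ) (hn : 2 ≤ n) (θ : MulAut G) :
    (∀ (φ : MulAut G) (u : G), Function.Bijective (alphaMap n θ φ u)) ∧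
    (∀ (φ : MulAut G) (u : G), derF n θ (fun _ => u) = u → ⁅φ, θ⁆ = MulAut.conj u →
      ∀ p q : ZMod (n - 1) × G,
        alphaMap n θ φ u (sdMul n θ p q) =
          sdMul n θ (alphaMap n θ φ u p) (alphaMap n θ φ u q)) ∧
    (∀ (φ₁ φ₂ φ₃ : MulAut G) (u₁ u₂ u₃ : G), ⁅φ₁, θ⁆ = MulAut.conj u₁ →
      (∀ x : G, φ₃ x * u₃ = φ₁ (φ₂ x * u₂) * u₁) →
        alphaMap n θ φ₃ u₃ = alphaMap n θ φ₁ u₁ ∘ alphaMap n θ φ₂ u₂) ∧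
    (∀ (φ₁ φ₂ : MulAut G) (u₁ u₂ : G),
      derF n θ (fun _ => u₁) = u₁ → derF n θ (fun _ => u₂) = u₂ →
      alphaMap n θ φ₁ u₁ = alphaMap n θ φ₂ u₂ → φ₁ = φ₂ ∧ u₁ = u₂) := by
  have : NeZero (n - 1) := ⟨by lia⟩
  have hδ {u : G} : derF n θ (fun _ => u) = u → delta θ (n - 1) u = 1 :=
    delta_sub_one_eq_one_of_derF_const
  refine ⟨alphaMap_bijective n θ, fun φ u hu h => alphaMap_sdMul (hδ hu) h, ?_,
    fun _ _ _ _ hu₁ hu₂ => eq_and_eq_of_alphaMap_eq (hδ hu₁) (hδ hu₂)⟩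
  intro φ₁ φ₂ φ₃ u₁ u₂ u₃ h₁ hcomp
  obtain ⟨rfl, rfl⟩ : φ₃ = φ₁ * φ₂ ∧ u₃ = φ₁ u₂ * u₁ :=
    eq_and_eq_of_forall_map_mul_eq fun x => by
      rw [hcomp, map_mul, mul_assoc, MulAut.mul_apply]
  exact alphaMap_mul n h₁ φ₂ u₂

end

/-- Let `(G,f) = der_θ(G,·)` with `θ^{n-1} = id`.  Writing each `Λ ∈ Aut(G,f)`
uniquely as `R_u φ` with `u` idempotent and `[φ,θ] = I_u`, the assignment
`α(R_u φ)(i,x) = (i, u⁻¹φ(x)u·δ(i,u))` is an injective group homomorphism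
`Aut(G,f) → Aut(ℤ_{n-1} ⋉ G)`: each `α(R_u φ)` is an automorphism of
`ℤ_{n-1} ⋉ G`, `α` is multiplicative, and `α` is injective. -/
theorem alpha_embedding {G : Type*} [Group G] (n : ℕ) (hn : 2 ≤ n)
    (θ : MulAut G) (hθ : θ ^ (n - 1) = 1) :
    (∀ (φ : MulAut G) (u : G), derF n θ (fun _ => u) = u →
      φ * θ * φ⁻¹ * θ⁻¹ = MulAut.conj u →
        Function.Bijective (alphaMap n θ φ u) ∧
          ∀ p q : ZMod (n - 1) × G,
            alphaMap n θ φ u (sdMul n θ p q) =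
              sdMul n θ (alphaMap n θ φ u p) (alphaMap n θ φ u q)) ∧
    (∀ (φ₁ φ₂ φ₃ : MulAut G) (u₁ u₂ u₃ : G),
      derF n θ (fun _ => u₁) = u₁ → derF n θ (fun _ => u₂) = u₂ →
      derF n θ (fun _ => u₃) = u₃ →
      φ₁ * θ * φ₁⁻¹ * θ⁻¹ = MulAut.conj u₁ →
      φ₂ * θ * φ₂⁻¹ * θ⁻¹ = MulAut.conj u₂ →
      φ₃ * θ * φ₃⁻¹ * θ⁻¹ = MulAut.conj u₃ →
      (∀ x : G, φ₃ x * u₃ = φ₁ (φ₂ x * u₂) * u₁) →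
        alphaMap n θ φ₃ u₃ = alphaMap n θ φ₁ u₁ ∘ alphaMap n θ φ₂ u₂) ∧
    (∀ (φ₁ φ₂ : MulAut G) (u₁ u₂ : G),
      derF n θ (fun _ => u₁) = u₁ → derF n θ (fun _ => u₂) = u₂ →
      φ₁ * θ * φ₁⁻¹ * θ⁻¹ = MulAut.conj u₁ →
      φ₂ * θ * φ₂⁻¹ * θ⁻¹ = MulAut.conj u₂ →
      alphaMap n θ φ₁ u₁ = alphaMap n θ φ₂ u₂ →
        (∀ x : G, φ₁ x * u₁ = φ₂ x * u₂)) := by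
  obtain ⟨hbij, hmul, hcomp, hinj⟩ := alpha_embedding_general n hn θ
  refine ⟨fun φ u hu h => ⟨hbij φ u, hmul φ u hu h⟩,
    fun φ₁ φ₂ φ₃ u₁ u₂ u₃ _ _ _ h₁ _ _ => hcomp φ₁ φ₂ φ₃ u₁ u₂ u₃ h₁, ?_⟩
  intro φ₁ φ₂ u₁ u₂ hu₁ hu₂ _ _ hα x
  obtain ⟨rfl, rfl⟩ := hinj φ₁ φ₂ u₁ u₂ hu₁ hu₂ hα
  rfl
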